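/- arXiv:1910.10430 — 3 statements merged into one kernel-verified Lean document; each statement's English description precedes it below -/
import Mathlib

section
/- Let 0 < a < 1/2. Then for each of the three entire functions F(s) = Y(s,a), F(s) = O(s,a), F(s) = X(s,a), a real number σ satisfies F(σ) = 0 if and only if σ is a negative odd integer, and every such zero is simple (the derivative F′(σ) is nonzero there). -/
open HurwitzZeta Complex

/-- `Y(s,a) = ζ(s,a) − ζ(s,1−a)`. -/
noncomputable def Yf (a : ℝ) : ℂ → ℂ :=
  fun s => hurwitzZeta a s - hurwitzZeta (1 - a : ℝ) s

/-- `O(s,a) = −i(Li_s(e^{2πia}) − Li_s(e^{2πi(1−a)}))`. -/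
noncomputable def Og (a : ℝ) : ℂ → ℂ :=
  fun s => -Complex.I * (expZeta a s - expZeta (1 - a : ℝ) s)

/-- `X(s,a) = Y(s,a) + O(s,a)`. -/
noncomputable def Xf (a : ℝ) : ℂ → ℂ :=
  fun s => Yf a s + Og a s

/-!
Each of the three functions is `Λ(s) / Γ_ℝ(s + 1)`, with `Λ` a combination with positive
coefficients of the completed odd Hurwitz zeta function and the completed sine zeta function.
For `σ > 0` the integral representations
`Γ(s) ∑ sin(nθ) n⁻ˢ = ∫ tˢ⁻¹ sin θ / (2 (cosh t - cos θ)) dt` and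
`Γ(s) (ζ(s,a) - ζ(s,1-a)) = ∫ tˢ⁻¹ sinh((1/2 - a) t) / sinh(t/2) dt`
have positive integrands, and the functional equation `s ↔ 1 - s` exchanges the two completed
functions, so `Λ > 0` on the whole real line. The real zeros are therefore the poles of
`Γ_ℝ(s + 1)`, which are simple.
-/

open Filter Topology Asymptotics Set MeasureTheory

section Positivity

open scoped ComplexOrder

theorem mellin_ofReal_pos {f : ℝ → ℝ} (hf : ∀ t, 0 < t → 0 < f t) {σ : ℝ}
    (hconv : MellinConvergent (fun t => (f t : ℂ)) σ) :
    0 < mellin (fun t => (f t : ℂ)) σ := by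
  have hcast : EqOn (fun t : ℝ => (t : ℂ) ^ ((σ : ℂ) - 1) • (f t : ℂ))
      (fun t : ℝ => ((t ^ (σ - 1) * f t : ℝ) : ℂ)) (Ioi 0) := fun t ht => by
    simp only [smul_eq_mul, ofReal_mul, ofReal_cpow (le_of_lt ht), ofReal_sub, ofReal_one]
  have hint : IntegrableOn (fun t : ℝ => t ^ (σ - 1) * f t) (Ioi 0) :=
    ((integrableOn_congr_fun hcast measurableSet_Ioi).mp hconv).re
  have hpos : ∀ t ∈ Ioi (0 : ℝ), 0 < t ^ (σ - 1) * f t := fun t ht =>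
    mul_pos (Real.rpow_pos_of_pos ht _) (hf t ht)
  rw [mellin, setIntegral_congr_fun measurableSet_Ioi hcast, integral_complex_ofReal, zero_lt_real,
    setIntegral_pos_iff_support_of_nonneg_ae
      (ae_restrict_of_forall_mem measurableSet_Ioi fun t ht => (hpos t ht).le) hint]
  have hsupport : Ioi (0 : ℝ) ⊆ Function.support (fun t => t ^ (σ - 1) * f t) ∩ Ioi 0 :=
    fun t ht => ⟨(hpos t ht).ne', ht⟩
  exact lt_of_lt_of_le (by simp) (measure_mono hsupport)

theorem eqOn_mellin_of_eqOn_halfPlane {E : Type*} [NormedAddCommGroup E] [NormedSpace ℂ E]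
    [CompleteSpace E] {f : ℝ → E} {G : ℂ → E} {k b c : ℝ} (hk : 0 < k)
    (hf : LocallyIntegrableOn f (Ioi 0)) (hf_top : f =O[atTop] fun t => Real.exp (-k * t))
    (hf_bot : f =O[𝓝[>] 0] (· ^ (-b))) (hG : DifferentiableOn ℂ G {s | b < s.re})
    (hmellin : EqOn (mellin f) G {s | c < s.re}) : EqOn (mellin f) G {s | b < s.re} := by
  have hopen (x : ℝ) : IsOpen {s : ℂ | x < s.re} := isOpen_lt continuous_const continuous_re
  have hM : DifferentiableOn ℂ (mellin f) {s | b < s.re} := fun s hs =>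
    (mellin_differentiableAt_of_isBigO_rpow_exp hk hf hf_top hf_bot hs).differentiableWithinAt
  have hb : ((max b c + 1 : ℝ) : ℂ) ∈ {s : ℂ | b < s.re} :=
    (le_max_left b c).trans_lt (lt_add_one _)
  have hc : ((max b c + 1 : ℝ) : ℂ) ∈ {s : ℂ | c < s.re} :=
    (le_max_right b c).trans_lt (lt_add_one _)
  exact (hM.analyticOnNhd (hopen b)).eqOn_of_preconnected_of_eventuallyEq
    (hG.analyticOnNhd (hopen b)) (convex_halfSpace_re_gt b).isPreconnected hb
    (hmellin.eventuallyEq_of_mem ((hopen c).mem_nhds hc))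

theorem Gamma_ofReal_pos {σ : ℝ} (hσ : 0 < σ) : 0 < Complex.Gamma σ := by
  rw [Complex.Gamma_ofReal, zero_lt_real]
  exact Real.Gamma_pos_of_pos hσ

theorem Gammaℝ_ofReal_pos {σ : ℝ} (hσ : 0 < σ) : 0 < Gammaℝ σ := by
  have hpow : (Real.pi : ℂ) ^ (-(σ : ℂ) / 2) = ((Real.pi ^ (-σ / 2) : ℝ) : ℂ) := by
    rw [ofReal_cpow Real.pi_pos.le]
    push_cast
    rfl
  rw [Gammaℝ_def, hpow, show (σ : ℂ) / 2 = ((σ / 2 : ℝ) : ℂ) by push_cast; rfl]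
  exact mul_pos (zero_lt_real.mpr (Real.rpow_pos_of_pos Real.pi_pos _))
    (Gamma_ofReal_pos (half_pos hσ))

theorem pos_of_mellin_eq_Gamma_mul {f : ℝ → ℝ} {L : ℂ → ℂ} {k c : ℝ} (hk : 0 < k)
    (hf_pos : ∀ t, 0 < t → 0 < f t) (hf_cont : ContinuousOn f (Ioi 0))
    (hf_top : f =O[atTop] fun t => Real.exp (-k * t)) (hf_bot : f =O[𝓝[>] 0] fun _ => (1 : ℝ))
    (hL : Differentiable ℂ L)
    (hmellin : ∀ s : ℂ, c < s.re → mellin (fun t => (f t : ℂ)) s = Complex.Gamma s * L s)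
    {σ : ℝ} (hσ : 0 < σ) : 0 < L σ := by
  have hloc : LocallyIntegrableOn (fun t => (f t : ℂ)) (Ioi 0) :=
    (continuous_ofReal.comp_continuousOn hf_cont).locallyIntegrableOn measurableSet_Ioi
  have htop : (fun t => (f t : ℂ)) =O[atTop] fun t => Real.exp (-k * t) :=
    isBigO_ofReal_left.mpr hf_top
  have hbot : (fun t => (f t : ℂ)) =O[𝓝[>] 0] fun t : ℝ => t ^ (-0 : ℝ) := by
    simpa only [neg_zero, Real.rpow_zero] using isBigO_ofReal_left.mpr hf_bot
  have hGL : DifferentiableOn ℂ (fun s => Complex.Gamma s * L s) {s | 0 < s.re} := fun s hs =>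
    ((differentiableAt_Gamma s fun m hm => by
      have hre : 0 < s.re := hs
      rw [hm, neg_re, natCast_re] at hre
      linarith [(Nat.cast_nonneg m : (0 : ℝ) ≤ m)]).mul (hL s)).differentiableWithinAt
  have heq : mellin (fun t => (f t : ℂ)) σ = Complex.Gamma σ * L σ :=
    eqOn_mellin_of_eqOn_halfPlane hk hloc htop hbot hGL hmellin hσ
  have hprod : 0 < Complex.Gamma σ * L σ := heq ▸ mellin_ofReal_pos hf_pos
    (mellinConvergent_of_isBigO_rpow_exp hk hloc htop hbot hσ)
  exact (pos_iff_pos_of_mul_pos hprod).mp (Gamma_ofReal_pos hσ)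

/-- The sum `∑ sin(nθ) e^{-nt}` in closed form, for `t > 0`; its Mellin transform is `Γ(s)` times
the Dirichlet series `∑ sin(nθ) n⁻ˢ`. -/
noncomputable def sinExpKernel (θ t : ℝ) : ℝ :=
  Real.sin θ / (2 * (Real.cosh t - Real.cos θ))

theorem cos_lt_cosh (θ : ℝ) {t : ℝ} (ht : t ≠ 0) : Real.cos θ < Real.cosh t :=
  (Real.cos_le_one θ).trans_lt (Real.one_lt_cosh.mpr ht)

theorem sinExpKernel_pos {θ t : ℝ} (hθ : 0 < Real.sin θ) (ht : t ≠ 0) : 0 < sinExpKernel θ t :=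
  div_pos hθ (mul_pos two_pos (sub_pos.mpr (cos_lt_cosh θ ht)))

theorem continuousOn_sinExpKernel (θ : ℝ) : ContinuousOn (sinExpKernel θ) (Ioi 0) := by
  refine continuousOn_const.div (by fun_prop) fun t ht => ?_
  exact mul_ne_zero two_ne_zero (sub_pos.mpr (cos_lt_cosh θ (ne_of_gt ht))).ne'

theorem isBigO_sinExpKernel_atTop (θ : ℝ) :
    sinExpKernel θ =O[atTop] fun t => Real.exp (-1 * t) := by
  refine IsBigO.of_bound 2 ?_
  filter_upwards [eventually_ge_atTop 3] with t ht
  have hexp : 4 ≤ Real.exp t := by linarith [Real.add_one_le_exp t]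
  have hdenom : Real.exp t / 2 ≤ 2 * (Real.cosh t - Real.cos θ) := by
    rw [Real.cosh_eq]
    linarith [Real.exp_pos (-t), Real.cos_le_one θ]
  rw [sinExpKernel, norm_div, Real.norm_eq_abs, Real.norm_eq_abs, Real.norm_eq_abs, Real.abs_exp,
    abs_of_pos (lt_of_lt_of_le (by positivity) hdenom)]
  calc |Real.sin θ| / (2 * (Real.cosh t - Real.cos θ)) ≤ 1 / (Real.exp t / 2) :=
        div_le_div₀ zero_le_one (Real.abs_sin_le_one θ) (by positivity) hdenom
    _ = 2 * Real.exp (-1 * t) := by rw [neg_one_mul, Real.exp_neg]; field_simp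

theorem isBigO_sinExpKernel_nhdsGT_zero {θ : ℝ} (hθ : Real.cos θ ≠ 1) :
    sinExpKernel θ =O[𝓝[>] 0] fun _ => (1 : ℝ) := by
  have hcont : ContinuousAt (sinExpKernel θ) 0 := by
    refine continuousAt_const.div (by fun_prop) ?_
    rw [Real.cosh_zero]
    exact mul_ne_zero two_ne_zero (sub_ne_zero.mpr hθ.symm)
  exact (hcont.tendsto.mono_left nhdsWithin_le_nhds).isBigO_one ℝ

theorem hasSum_sinExpKernel (θ : ℝ) {t : ℝ} (ht : 0 < t) :
    HasSum (fun n : ℕ => Real.sin (n * θ) * Real.exp (-n * t)) (sinExpKernel θ t) := by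
  set z : ℂ := Complex.exp (-t + θ * I) with hz
  have hnorm : ‖z‖ < 1 := by simpa [hz, Complex.norm_exp] using ht
  have hre : z.re = Real.exp (-t) * Real.cos θ := by simp [hz, Complex.exp_re]
  have him : z.im = Real.exp (-t) * Real.sin θ := by simp [hz, Complex.exp_im]
  have hterm (n : ℕ) : (z ^ n).im = Real.sin (n * θ) * Real.exp (-n * t) := by
    rw [hz, ← Complex.exp_nat_mul, Complex.exp_im, mul_comm]
    simp
  have hclosed : ((1 - z)⁻¹).im = sinExpKernel θ t := by
    have hnormSq : normSq (1 - z) = Real.exp (-t) * (2 * (Real.cosh t - Real.cos θ)) := by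
      rw [normSq_apply, sub_re, sub_im, one_re, one_im, hre, him, Real.cosh_eq]
      have hexp : Real.exp (-t) * Real.exp t = 1 := by rw [← Real.exp_add]; simp
      linear_combination Real.exp (-t) ^ 2 * Real.sin_sq_add_cos_sq θ - hexp
    rw [inv_im, hnormSq, sub_im, one_im, him, sinExpKernel, zero_sub, neg_neg,
      mul_div_mul_left _ _ (Real.exp_ne_zero _)]
  simpa only [hterm, hclosed] using hasSum_im (hasSum_geometric_of_norm_lt_one hnorm)

theorem mellin_sinExpKernel (a : ℝ) {s : ℂ} (hs : 1 < s.re) :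
    mellin (fun t => (sinExpKernel (2 * Real.pi * a) t : ℂ)) s =
      Complex.Gamma s * sinZeta a s := by
  have hkernel : ∀ t ∈ Ioi (0 : ℝ), HasSum
      (fun n : ℕ => (Real.sin (2 * Real.pi * a * n) : ℂ) * Real.exp (-(n : ℝ) * t))
      (sinExpKernel (2 * Real.pi * a) t) := fun t ht => by
    refine (hasSum_ofReal.mpr (hasSum_sinExpKernel _ ht)).congr_fun fun n => ?_
    rw [ofReal_mul, mul_comm (n : ℝ)]
  have hsummable : Summable fun n : ℕ => ‖(Real.sin (2 * Real.pi * a * n) : ℂ)‖ / (n : ℝ) ^ s.re :=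
    (Real.summable_one_div_nat_rpow.mpr hs).of_nonneg_of_le (fun n => by positivity) fun n => by
      rw [norm_real]
      gcongr
      exact Real.abs_sin_le_one _
  have hcoeff (n : ℕ) : (Real.sin (2 * Real.pi * a * n) : ℂ) = 0 ∨ (0 : ℝ) < n := by
    rcases n.eq_zero_or_pos with rfl | hn
    · simp
    · exact Or.inr (Nat.cast_pos.mpr hn)
  have hmellin := hasSum_mellin hcoeff (zero_lt_one.trans hs) hkernel hsummable
  simp only [mul_div_assoc, ofReal_natCast] at hmellin
  exact hmellin.unique ((hasSum_nat_sinZeta a hs).mul_left _)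

/-- The sum `½ ∑ sign(n + a) e^{-|n + a| t}` over `n ∈ ℤ` in closed form, for `0 < a < 1` and
`t > 0`; its Mellin transform is `Γ(s)` times the odd Hurwitz zeta function. -/
noncomputable def hurwitzOddExpKernel (a t : ℝ) : ℝ :=
  Real.sinh ((1 / 2 - a) * t) / (2 * Real.sinh (t / 2))

theorem hurwitzOddExpKernel_pos {a t : ℝ} (ha : a < 1 / 2) (ht : 0 < t) :
    0 < hurwitzOddExpKernel a t :=
  div_pos (Real.sinh_pos_iff.mpr (mul_pos (sub_pos.mpr ha) ht))
    (mul_pos two_pos (Real.sinh_pos_iff.mpr (half_pos ht)))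

theorem continuousOn_hurwitzOddExpKernel (a : ℝ) :
    ContinuousOn (hurwitzOddExpKernel a) (Ioi 0) := by
  refine ContinuousOn.div (by fun_prop) (by fun_prop) fun t ht => ?_
  exact mul_ne_zero two_ne_zero (Real.sinh_pos_iff.mpr (half_pos ht)).ne'

theorem isBigO_hurwitzOddExpKernel_atTop {a : ℝ} (ha : a < 1 / 2) :
    hurwitzOddExpKernel a =O[atTop] fun t => Real.exp (-a * t) := by
  refine IsBigO.of_bound 1 ?_
  filter_upwards [eventually_ge_atTop 1] with t ht
  have hdenom : Real.exp (t / 2) / 2 ≤ 2 * Real.sinh (t / 2) := by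
    have hexp : 2 * Real.exp (-(t / 2)) ≤ Real.exp (t / 2) := by
      have h2 : 2 ≤ Real.exp t := by linarith [Real.add_one_le_exp t]
      calc 2 * Real.exp (-(t / 2)) ≤ Real.exp t * Real.exp (-(t / 2)) := by gcongr
        _ = Real.exp (t / 2) := by rw [← Real.exp_add]; ring_nf
    rw [Real.sinh_eq]
    linarith
  have hnum : Real.sinh ((1 / 2 - a) * t) ≤ Real.exp ((1 / 2 - a) * t) / 2 := by
    rw [Real.sinh_eq]
    linarith [Real.exp_pos (-((1 / 2 - a) * t))]
  rw [Real.norm_of_nonneg (hurwitzOddExpKernel_pos ha (by linarith)).le,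
    Real.norm_of_nonneg (Real.exp_pos _).le, one_mul]
  calc hurwitzOddExpKernel a t
      ≤ (Real.exp ((1 / 2 - a) * t) / 2) / (Real.exp (t / 2) / 2) :=
        div_le_div₀ (by positivity) hnum (by positivity) hdenom
    _ = Real.exp (-a * t) := by
        rw [div_div_div_cancel_right₀ two_ne_zero, ← Real.exp_sub]; ring_nf

theorem isBigO_hurwitzOddExpKernel_nhdsGT_zero {a : ℝ} (ha₀ : 0 ≤ a) (ha₁ : a < 1 / 2) :
    hurwitzOddExpKernel a =O[𝓝[>] 0] fun _ => (1 : ℝ) := by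
  refine IsBigO.of_bound 1 ?_
  filter_upwards [self_mem_nhdsWithin] with t (ht : 0 < t)
  have hsinh : 0 < Real.sinh (t / 2) := Real.sinh_pos_iff.mpr (half_pos ht)
  have hle : Real.sinh ((1 / 2 - a) * t) ≤ Real.sinh (t / 2) :=
    Real.sinh_le_sinh.mpr (by nlinarith)
  rw [Real.norm_of_nonneg (hurwitzOddExpKernel_pos ha₁ ht).le, norm_one, one_mul,
    hurwitzOddExpKernel, div_le_one (mul_pos two_pos hsinh)]
  linarith

theorem hurwitzOddExpKernel_eq (a t : ℝ) : hurwitzOddExpKernel a t =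
    (Real.exp (-a * t) - Real.exp (-(1 - a) * t)) / (2 * (1 - Real.exp (-t))) := by
  have hscale (x : ℝ) : 2 * Real.sinh x * Real.exp (-(t / 2)) =
      Real.exp (x - t / 2) - Real.exp (-x - t / 2) := by
    rw [Real.sinh_eq, sub_eq_add_neg x, sub_eq_add_neg (-x), Real.exp_add, Real.exp_add]
    ring
  have hdenom : 1 - Real.exp (-t) = 2 * Real.sinh (t / 2) * Real.exp (-(t / 2)) := by
    rw [hscale, sub_self, Real.exp_zero]
    ring_nf
  have hnum : Real.exp (-a * t) - Real.exp (-(1 - a) * t) =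
      2 * Real.sinh ((1 / 2 - a) * t) * Real.exp (-(t / 2)) := by
    rw [hscale]
    ring_nf
  rw [hnum, hdenom, ← mul_assoc 2, mul_div_mul_right _ _ (Real.exp_ne_zero _),
    mul_div_mul_left _ _ two_ne_zero, hurwitzOddExpKernel]

theorem hasSum_hurwitzOddExpKernel {a t : ℝ} (ha₀ : 0 < a) (ha₁ : a < 1) (ht : 0 < t) :
    HasSum (fun n : ℤ => (SignType.sign (n + a) : ℝ) / 2 * Real.exp (-|n + a| * t))
      (hurwitzOddExpKernel a t) := by
  have hgeom (b : ℝ) : HasSum (fun n : ℕ => Real.exp (-(n + b) * t) / 2)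
      (Real.exp (-b * t) / 2 * (1 - Real.exp (-t))⁻¹) := by
    refine ((hasSum_geometric_of_lt_one (Real.exp_pos (-t)).le
      (Real.exp_lt_one_iff.mpr (neg_lt_zero.mpr ht))).mul_left (Real.exp (-b * t) / 2)).congr_fun
        fun n => ?_
    rw [← Real.exp_nat_mul, div_mul_eq_mul_div, ← Real.exp_add]
    ring_nf
  have hclosed : hurwitzOddExpKernel a t = Real.exp (-a * t) / 2 * (1 - Real.exp (-t))⁻¹ +
      -(Real.exp (-(1 - a) * t) / 2 * (1 - Real.exp (-t))⁻¹) := by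
    rw [hurwitzOddExpKernel_eq, div_mul_eq_div_div]
    ring
  rw [hclosed]
  refine HasSum.of_nat_of_neg_add_one ((hgeom a).congr_fun fun n => ?_)
    ((hgeom (1 - a)).neg.congr_fun fun n => ?_)
  · have hpos : 0 < (n : ℝ) + a := by positivity
    simp [abs_of_pos hpos, sign_pos hpos, div_eq_inv_mul]
  · have hneg : -((n : ℝ) + 1) + a < 0 := by linarith [(Nat.cast_nonneg n : (0 : ℝ) ≤ n)]
    push_cast
    rw [abs_of_neg hneg, sign_neg hneg, SignType.coe_neg_one]
    ring_nf

theorem mellin_hurwitzOddExpKernel {a : ℝ} (ha₀ : 0 < a) (ha₁ : a < 1) {s : ℂ} (hs : 1 < s.re) :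
    mellin (fun t => (hurwitzOddExpKernel a t : ℂ)) s =
      Complex.Gamma s * hurwitzZetaOdd a s := by
  have hne (n : ℤ) : (n : ℝ) + a ≠ 0 := fun h => by
    have hgt : (-1 : ℝ) < n := by linarith
    have hlt : (n : ℝ) < 0 := by linarith
    have hgt' : -1 < n := by exact_mod_cast hgt
    have hlt' : n < 0 := by exact_mod_cast hlt
    omega
  have hkernel : ∀ t ∈ Ioi (0 : ℝ), HasSum
      (fun n : ℤ => (SignType.sign (n + a) : ℂ) / 2 * Real.exp (-|n + a| * t))
      (hurwitzOddExpKernel a t) := fun t ht => by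
    refine (hasSum_ofReal.mpr (hasSum_hurwitzOddExpKernel ha₀ ha₁ ht)).congr_fun fun n => ?_
    have hsign : ((SignType.sign (n + a) : ℝ) : ℂ) = SignType.sign (n + a) :=
      SignType.map_cast ofRealHom _
    rw [ofReal_mul, ofReal_div, ofReal_ofNat, hsign]
  have hsummable : Summable fun n : ℤ => ‖(SignType.sign (n + a) : ℂ) / 2‖ / |n + a| ^ s.re := by
    refine ((Real.summable_one_div_int_add_rpow a s.re).mpr hs).of_nonneg_of_le
      (fun n => by positivity) fun n => ?_
    gcongr
    rcases SignType.sign ((n : ℝ) + a) <;> norm_num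
  have hmellin := hasSum_mellin (fun n => Or.inr (abs_pos.mpr (hne n))) (zero_lt_one.trans hs)
    hkernel hsummable
  refine hmellin.unique (((hasSum_int_hurwitzZetaOdd a hs).mul_left _).congr_fun fun n => ?_)
  ring

theorem sinZeta_pos {a : ℝ} (ha₀ : 0 < a) (ha₁ : a < 1 / 2) {σ : ℝ} (hσ : 0 < σ) :
    0 < sinZeta a σ := by
  have hsin : 0 < Real.sin (2 * Real.pi * a) :=
    Real.sin_pos_of_pos_of_lt_pi (by positivity) (by nlinarith [Real.pi_pos])
  have hcos : Real.cos (2 * Real.pi * a) ≠ 1 := fun h => by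
    nlinarith [Real.sin_sq_add_cos_sq (2 * Real.pi * a)]
  exact pos_of_mellin_eq_Gamma_mul one_pos (fun t ht => sinExpKernel_pos hsin ht.ne')
    (continuousOn_sinExpKernel _) (isBigO_sinExpKernel_atTop _)
    (isBigO_sinExpKernel_nhdsGT_zero hcos) (differentiableAt_sinZeta a)
    (fun s hs => mellin_sinExpKernel a hs) hσ

theorem hurwitzZetaOdd_pos {a : ℝ} (ha₀ : 0 < a) (ha₁ : a < 1 / 2) {σ : ℝ} (hσ : 0 < σ) :
    0 < hurwitzZetaOdd a σ :=
  pos_of_mellin_eq_Gamma_mul ha₀ (fun _ ht => hurwitzOddExpKernel_pos ha₁ ht)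
    (continuousOn_hurwitzOddExpKernel a) (isBigO_hurwitzOddExpKernel_atTop ha₁)
    (isBigO_hurwitzOddExpKernel_nhdsGT_zero ha₀.le ha₁) (differentiable_hurwitzZetaOdd a)
    (fun _ hs => mellin_hurwitzOddExpKernel ha₀ (by linarith) hs) hσ

theorem pos_of_div_Gammaℝ_add_one_pos {z : ℂ} {σ : ℝ} (hσ : 0 < σ)
    (hz : 0 < z / Gammaℝ (σ + 1)) : 0 < z := by
  have hΓ : 0 < Gammaℝ (σ + 1) := by
    exact_mod_cast Gammaℝ_ofReal_pos (add_pos hσ one_pos)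
  simpa only [div_mul_cancel₀ z hΓ.ne'] using mul_pos hz hΓ

theorem completedHurwitzZetaOdd_pos {a : ℝ} (ha₀ : 0 < a) (ha₁ : a < 1 / 2) (σ : ℝ) :
    0 < completedHurwitzZetaOdd a σ := by
  rcases lt_or_ge 0 σ with hσ | hσ
  · exact pos_of_div_Gammaℝ_add_one_pos hσ (hurwitzZetaOdd_pos ha₀ ha₁ hσ)
  · have hσ' : 0 < 1 - σ := by linarith
    have hsin := pos_of_div_Gammaℝ_add_one_pos hσ' (sinZeta_pos ha₀ ha₁ hσ')
    rwa [ofReal_sub, ofReal_one, completedSinZeta_one_sub] at hsin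

theorem completedSinZeta_pos {a : ℝ} (ha₀ : 0 < a) (ha₁ : a < 1 / 2) (σ : ℝ) :
    0 < completedSinZeta a σ := by
  have h := completedHurwitzZetaOdd_pos ha₀ ha₁ (1 - σ)
  rwa [ofReal_sub, ofReal_one, completedHurwitzZetaOdd_one_sub] at h

end Positivity

theorem inv_Gammaℝ_mul_inv_Gammaℝ_two_sub (s : ℂ) :
    (Gammaℝ s)⁻¹ * (Gammaℝ (2 - s))⁻¹ = Complex.sin (Real.pi / 2 * s) := by
  have h := Gammaℝ_one_sub_mul_Gammaℝ_one_add (s - 1)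
  rw [show 1 - (s - 1) = 2 - s by ring, add_sub_cancel,
    show (Real.pi : ℂ) * (s - 1) / 2 = Real.pi / 2 * s - Real.pi / 2 by ring,
    Complex.cos_sub_pi_div_two] at h
  rw [← mul_inv, mul_comm, h, inv_inv]

-- Mathlib's `Gammaℝ` takes the value `0` at its poles.
theorem deriv_inv_Gammaℝ_ne_zero {s : ℂ} (hs : Gammaℝ s = 0) :
    deriv (fun z => (Gammaℝ z)⁻¹) s ≠ 0 := by
  have hinv : DifferentiableAt ℂ (fun z => (Gammaℝ z)⁻¹) s := differentiable_Gammaℝ_inv s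
  have hinv' : DifferentiableAt ℂ (fun z => (Gammaℝ (2 - z))⁻¹) s :=
    (differentiable_Gammaℝ_inv (2 - s)).comp s (differentiableAt_id.const_sub 2)
  have hsin : HasDerivAt (fun z => Complex.sin (Real.pi / 2 * z))
      (Complex.cos (Real.pi / 2 * s) * (Real.pi / 2)) s := by
    simpa using ((hasDerivAt_id s).const_mul (Real.pi / 2 : ℂ)).csin
  have hprod : deriv (fun z => (Gammaℝ z)⁻¹) s * (Gammaℝ (2 - s))⁻¹ =
      Complex.cos (Real.pi / 2 * s) * (Real.pi / 2) := by
    have h := hinv.hasDerivAt.mul hinv'.hasDerivAt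
    rw [hs, inv_zero, zero_mul, add_zero] at h
    exact (h.congr_of_eventuallyEq (.of_forall fun z =>
      (inv_Gammaℝ_mul_inv_Gammaℝ_two_sub z).symm)).unique hsin
  have hsin_zero : Complex.sin (Real.pi / 2 * s) = 0 := by
    rw [← inv_Gammaℝ_mul_inv_Gammaℝ_two_sub, hs, inv_zero, zero_mul]
  have hcos : Complex.cos (Real.pi / 2 * s) ≠ 0 := fun hcos_zero => by
    simpa [hsin_zero, hcos_zero] using Complex.sin_sq_add_cos_sq (Real.pi / 2 * s)
  have hpi : (Real.pi / 2 : ℂ) ≠ 0 := div_ne_zero (ofReal_ne_zero.mpr Real.pi_ne_zero) two_ne_zero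
  exact left_ne_zero_of_mul (hprod ▸ mul_ne_zero hcos hpi)

theorem div_Gammaℝ_add_one_eq_zero_iff {z : ℂ} (hz : z ≠ 0) (σ : ℝ) :
    z / Gammaℝ (σ + 1) = 0 ↔ ∃ n : ℕ, σ = -(2 * n + 1) := by
  rw [div_eq_zero_iff, or_iff_right hz, Gammaℝ_eq_zero_iff]
  refine exists_congr fun n => ?_
  rw [← eq_sub_iff_add_eq, ← ofReal_inj]
  push_cast
  rw [neg_add, sub_eq_add_neg]

theorem deriv_div_Gammaℝ_add_one_ne_zero {Λ : ℂ → ℂ} {s : ℂ} (hΛ : DifferentiableAt ℂ Λ s)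
    (hne : Λ s ≠ 0) (hs : Λ s / Gammaℝ (s + 1) = 0) :
    deriv (fun z => Λ z / Gammaℝ (z + 1)) s ≠ 0 := by
  have hpole : Gammaℝ (s + 1) = 0 := (div_eq_zero_iff.mp hs).resolve_left hne
  have hinv : HasDerivAt (fun z => (Gammaℝ (z + 1))⁻¹)
      (deriv (fun z => (Gammaℝ z)⁻¹) (s + 1)) s :=
    (differentiable_Gammaℝ_inv (s + 1)).hasDerivAt.comp_add_const s 1
  have hderiv := hΛ.hasDerivAt.mul hinv
  rw [hpole, inv_zero, mul_zero, zero_add] at hderiv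
  exact hderiv.deriv ▸ mul_ne_zero hne (deriv_inv_Gammaℝ_ne_zero hpole)

theorem coe_one_sub_eq_neg (a : ℝ) : ((1 - a : ℝ) : UnitAddCircle) = -(a : UnitAddCircle) := by
  rw [AddCircle.coe_sub, AddCircle.coe_period, zero_sub]

theorem Yf_eq_completedHurwitzZetaOdd_div (a : ℝ) :
    Yf a = fun s => 2 * completedHurwitzZetaOdd a s / Gammaℝ (s + 1) := by
  funext s
  have h : hurwitzZetaOdd a s = (hurwitzZeta a s - hurwitzZeta (-a) s) / 2 := hurwitzZetaOdd_eq a s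
  rw [Yf, coe_one_sub_eq_neg, mul_div_assoc, ← hurwitzZetaOdd, h]
  ring

theorem Og_eq_completedSinZeta_div (a : ℝ) :
    Og a = fun s => 2 * completedSinZeta a s / Gammaℝ (s + 1) := by
  funext s
  rw [Og, coe_one_sub_eq_neg, expZeta, expZeta, cosZeta_neg, sinZeta_neg, mul_div_assoc, ← sinZeta]
  linear_combination (-2 * sinZeta a s) * I_sq

theorem Xf_eq_add_div (a : ℝ) :
    Xf a = fun s =>
      (2 * completedHurwitzZetaOdd a s + 2 * completedSinZeta a s) / Gammaℝ (s + 1) := by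
  funext s
  rw [Xf, Yf_eq_completedHurwitzZetaOdd_div, Og_eq_completedSinZeta_div, add_div]

open scoped ComplexOrder in
theorem exists_ne_zero_eq_div_Gammaℝ_add_one {a : ℝ} (ha₀ : 0 < a) (ha₁ : a < 1 / 2) {F : ℂ → ℂ}
    (hF : F ∈ ({Yf a, Og a, Xf a} : Set (ℂ → ℂ))) :
    ∃ Λ : ℂ → ℂ, Differentiable ℂ Λ ∧ (∀ σ : ℝ, Λ σ ≠ 0) ∧ F = fun s => Λ s / Gammaℝ (s + 1) := by
  have hY := (differentiable_completedHurwitzZetaOdd a).const_mul 2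
  have hO := (differentiable_completedSinZeta a).const_mul 2
  have hY_pos (σ : ℝ) := mul_pos two_pos (completedHurwitzZetaOdd_pos ha₀ ha₁ σ)
  have hO_pos (σ : ℝ) := mul_pos two_pos (completedSinZeta_pos ha₀ ha₁ σ)
  rcases hF with rfl | rfl | rfl
  · exact ⟨_, hY, fun σ => (hY_pos σ).ne', Yf_eq_completedHurwitzZetaOdd_div a⟩
  · exact ⟨_, hO, fun σ => (hO_pos σ).ne', Og_eq_completedSinZeta_div a⟩
  · exact ⟨_, hY.add hO, fun σ => (add_pos (hY_pos σ) (hO_pos σ)).ne', Xf_eq_add_div a⟩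

/-- For `0 < a < 1/2`, each of `Y(·,a)`, `O(·,a)`, `X(·,a)` vanishes at a real
point `σ` iff `σ` is a negative odd integer, and each such zero is simple. -/
theorem real_zeros_Y_O_X (a : ℝ) (ha₀ : 0 < a) (ha₁ : a < 1 / 2) :
    ∀ F ∈ ({Yf a, Og a, Xf a} : Set (ℂ → ℂ)), ∀ σ : ℝ,
      (F (σ : ℂ) = 0 ↔ ∃ n : ℕ, σ = -(2 * n + 1)) ∧
      (F (σ : ℂ) = 0 → deriv F (σ : ℂ) ≠ 0) := by
  intro F hF σ
  obtain ⟨Λ, hΛ, hne, rfl⟩ := exists_ne_zero_eq_div_Gammaℝ_add_one ha₀ ha₁ hF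
  exact ⟨div_Gammaℝ_add_one_eq_zero_iff (hne σ) σ,
    deriv_div_Gammaℝ_add_one_ne_zero (hΛ σ) (hne σ)⟩
end

section
/- Let 0 < a ≤ 1/2. Then the following are equivalent: (i) 1/4 ≤ a ≤ 1/2; (ii) for every real σ, P(σ,a) = 0 if and only if σ is a negative even integer (σ ∈ {−2, −4, −6, …}), and each of these zeros is simple (the derivative of s ↦ P(s,a) is nonzero there). -/
open HurwitzZeta Complex

/-- `P(s,a) = Li_s(e^{2πia}) + Li_s(e^{2πi(1−a)})`. -/
noncomputable def Pf (a : ℝ) : ℂ → ℂ :=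
  fun s => expZeta a s + expZeta (1 - a : ℝ) s

/-!
`P(·, a)` is twice the cosine zeta function `s ↦ ∑ cos (2πna) n⁻ˢ`. To the left of `0` the
functional equation writes the latter as `sin (πs/2)` times an even Hurwitz zeta value at
`1 - s > 1` and other nonvanishing factors, so that it has exactly the trivial zeros there, all
simple, whatever `a` is. To the right of `0`, `Γ(s)` times the cosine zeta function is the Mellin
transform of `x (c - x) / (1 - 2cx + x²)` with `x = e⁻ᵗ` and `c = cos 2πa`. For `c ≤ 0` this kernel
is negative, which rules out zeros. For `c > 0` the intermediate value theorem produces one, since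
the cosine zeta function is `-1/2` at `0` and tends to `c` at infinity.
-/

open Asymptotics Filter MeasureTheory Set
open scoped Real Topology

/-! ### The generating function of `cos (nθ)` -/

/-- The generating function `∑ n ≥ 1, cos (nθ) xⁿ` in closed form, as a function of `c = cos θ`
and `x`. At `x = e⁻ᵗ` it is the kernel of the Mellin integral for `Γ(s)` times the cosine zeta
function. -/
noncomputable def cosGenFun (c x : ℝ) : ℝ :=
  x * (c - x) / (1 - 2 * c * x + x ^ 2)

lemma hasSum_cosGenFun (θ : ℝ) {x : ℝ} (hx : |x| < 1) :
    HasSum (fun n : ℕ ↦ Real.cos ((n + 1) * θ) * x ^ (n + 1)) (cosGenFun (Real.cos θ) x) := by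
  set z : ℂ := x * cexp (θ * I) with hz
  have hz_norm : ‖z‖ < 1 := by simpa [hz, norm_exp_ofReal_mul_I] using hx
  have hz_re : z.re = x * Real.cos θ := by rw [hz, re_ofReal_mul, exp_ofReal_mul_I_re]
  have hz_im : z.im = x * Real.sin θ := by rw [hz, im_ofReal_mul, exp_ofReal_mul_I_im]
  have hz_pow (n : ℕ) : (z * z ^ n).re = Real.cos ((n + 1) * θ) * x ^ (n + 1) := by
    rw [← pow_succ', hz, mul_pow, ← ofReal_pow, re_ofReal_mul, ← Complex.exp_nat_mul, mul_comm,
      ← exp_ofReal_mul_I_re]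
    push_cast
    ring_nf
  have hz_sum : (z * (1 - z)⁻¹).re = cosGenFun (Real.cos θ) x := by
    have h_normSq : normSq (1 - z) = 1 - 2 * Real.cos θ * x + x ^ 2 := by
      rw [normSq_apply, sub_re, sub_im, one_re, one_im, hz_re, hz_im]
      linear_combination x ^ 2 * Real.sin_sq_add_cos_sq θ
    rw [← div_eq_mul_inv, div_re, h_normSq, sub_re, sub_im, one_re, one_im, hz_re, hz_im,
      ← add_div, cosGenFun]
    congr 1
    linear_combination -x ^ 2 * Real.sin_sq_add_cos_sq θ
  simpa only [hz_pow, hz_sum] using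
    hasSum_re ((hasSum_geometric_of_norm_lt_one hz_norm).mul_left z)

lemma cosGenFun_denom_pos {c x : ℝ} (hc : c < 1) (hx : 0 ≤ x) : 0 < 1 - 2 * c * x + x ^ 2 := by
  rcases hx.eq_or_lt with rfl | hx
  · norm_num
  · nlinarith [sq_nonneg (1 - x), mul_pos hx (sub_pos.2 hc)]

lemma cosGenFun_neg {c x : ℝ} (hc : c ≤ 0) (hx : 0 < x) : cosGenFun c x < 0 :=
  div_neg_of_neg_of_pos (mul_neg_of_pos_of_neg hx (by linarith))
    (cosGenFun_denom_pos (by linarith) hx.le)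

lemma continuous_cosGenFun_exp_neg {c : ℝ} (hc : c < 1) :
    Continuous fun t : ℝ ↦ cosGenFun c (Real.exp (-t)) := by
  have h_denom (t : ℝ) : 1 - 2 * c * Real.exp (-t) + Real.exp (-t) ^ 2 ≠ 0 :=
    (cosGenFun_denom_pos hc (Real.exp_pos _).le).ne'
  unfold cosGenFun
  fun_prop (disch := exact h_denom _)

lemma cosGenFun_isBigO_nhds_zero (c : ℝ) : cosGenFun c =O[𝓝 0] fun x ↦ x := by
  have h_diff : DifferentiableAt ℝ (cosGenFun c) 0 := by
    unfold cosGenFun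
    fun_prop (disch := norm_num)
  have h_zero : cosGenFun c 0 = 0 := by simp [cosGenFun]
  simpa only [h_zero, sub_zero] using h_diff.isBigO_sub

/-! ### Mellin transforms -/

lemma ofReal_cpow_ofReal_sub_one {t : ℝ} (ht : 0 ≤ t) (σ : ℝ) :
    (t : ℂ) ^ ((σ : ℂ) - 1) = ((t ^ (σ - 1) : ℝ) : ℂ) := by
  rw [ofReal_cpow ht, ofReal_sub, ofReal_one]

lemma mellin_ofReal (f : ℝ → ℝ) (σ : ℝ) :
    mellin (fun t ↦ (f t : ℂ)) σ = ((∫ t in Ioi 0, t ^ (σ - 1) * f t : ℝ) : ℂ) := by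
  rw [mellin, ← integral_complex_ofReal]
  refine setIntegral_congr_fun measurableSet_Ioi fun t ht ↦ ?_
  simp only [smul_eq_mul, ofReal_mul, ofReal_cpow_ofReal_sub_one (le_of_lt ht)]

lemma integrableOn_rpow_mul_of_mellinConvergent {f : ℝ → ℝ} {σ : ℝ}
    (hf : MellinConvergent (fun t ↦ (f t : ℂ)) σ) :
    IntegrableOn (fun t ↦ t ^ (σ - 1) * f t) (Ioi 0) := by
  refine IntegrableOn.congr_fun hf.re (fun t ht ↦ ?_) measurableSet_Ioi
  simp [ofReal_cpow_ofReal_sub_one (le_of_lt ht)]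

lemma integral_rpow_mul_neg {f : ℝ → ℝ} {σ : ℝ}
    (hf : MellinConvergent (fun t ↦ (f t : ℂ)) σ) (hf_neg : ∀ t, 0 < t → f t < 0) :
    ∫ t in Ioi 0, t ^ (σ - 1) * f t < 0 := by
  have h_pos : ∀ t ∈ Ioi (0 : ℝ), 0 < -(t ^ (σ - 1) * f t) := fun t ht ↦
    neg_pos.2 (mul_neg_of_pos_of_neg (Real.rpow_pos_of_pos ht _) (hf_neg t ht))
  rw [← neg_pos, ← integral_neg, setIntegral_pos_iff_support_of_nonneg_ae
    (ae_restrict_of_forall_mem measurableSet_Ioi fun t ht ↦ (h_pos t ht).le)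
    (integrableOn_rpow_mul_of_mellinConvergent hf).neg]
  have h_support : Ioi 0 ⊆ Function.support fun t ↦ -(t ^ (σ - 1) * f t) :=
    fun t ht ↦ (h_pos t ht).ne'
  rw [inter_eq_right.2 h_support, Real.volume_Ioi]
  exact ENNReal.zero_lt_top

lemma locallyIntegrableOn_cosGenFun_exp_neg {c : ℝ} (hc : c < 1) :
    LocallyIntegrableOn (fun t : ℝ ↦ (cosGenFun c (Real.exp (-t)) : ℂ)) (Ioi 0) :=
  (continuous_ofReal.comp (continuous_cosGenFun_exp_neg hc)).locallyIntegrable.locallyIntegrableOn _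

lemma cosGenFun_exp_neg_isBigO_atTop (c : ℝ) :
    (fun t : ℝ ↦ (cosGenFun c (Real.exp (-t)) : ℂ)) =O[atTop] fun t ↦ Real.exp (-1 * t) := by
  simpa only [neg_one_mul, Function.comp_def] using isBigO_ofReal_left.2
    ((cosGenFun_isBigO_nhds_zero c).comp_tendsto Real.tendsto_exp_neg_atTop_nhds_zero)

lemma cosGenFun_exp_neg_isBigO_nhdsGT_zero {c : ℝ} (hc : c < 1) :
    (fun t : ℝ ↦ (cosGenFun c (Real.exp (-t)) : ℂ)) =O[𝓝[>] 0] fun t : ℝ ↦ t ^ (-(0 : ℝ)) := by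
  have h_cont : Continuous fun t : ℝ ↦ (cosGenFun c (Real.exp (-t)) : ℂ) :=
    continuous_ofReal.comp (continuous_cosGenFun_exp_neg hc)
  simpa only [neg_zero, Real.rpow_zero] using
    ((h_cont.tendsto 0).mono_left nhdsWithin_le_nhds).isBigO_one ℝ

lemma mellinConvergent_cosGenFun_exp_neg {c : ℝ} (hc : c < 1) {s : ℂ} (hs : 0 < s.re) :
    MellinConvergent (fun t : ℝ ↦ (cosGenFun c (Real.exp (-t)) : ℂ)) s :=
  mellinConvergent_of_isBigO_rpow_exp one_pos (locallyIntegrableOn_cosGenFun_exp_neg hc)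
    (cosGenFun_exp_neg_isBigO_atTop c) (cosGenFun_exp_neg_isBigO_nhdsGT_zero hc) hs

lemma differentiableAt_mellin_cosGenFun_exp_neg {c : ℝ} (hc : c < 1) {s : ℂ} (hs : 0 < s.re) :
    DifferentiableAt ℂ (mellin fun t : ℝ ↦ (cosGenFun c (Real.exp (-t)) : ℂ)) s :=
  mellin_differentiableAt_of_isBigO_rpow_exp one_pos (locallyIntegrableOn_cosGenFun_exp_neg hc)
    (cosGenFun_exp_neg_isBigO_atTop c) (cosGenFun_exp_neg_isBigO_nhdsGT_zero hc) hs

/-! ### The cosine zeta function on the positive half-line -/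

lemma ne_natCast_of_re_neg {s : ℂ} (hs : s.re < 0) (n : ℕ) : s ≠ n := by
  rintro rfl
  exact n.cast_nonneg.not_gt (natCast_re n ▸ hs)

lemma differentiableAt_Gamma_of_re_pos {s : ℂ} (hs : 0 < s.re) : DifferentiableAt ℂ Gamma s :=
  differentiableAt_Gamma s fun n hn ↦
    ne_natCast_of_re_neg (s := -s) (by simpa using hs) n (by rw [hn, neg_neg])

lemma cos_two_pi_mul_lt_one {a : ℝ} (ha : (a : UnitAddCircle) ≠ 0) : Real.cos (2 * π * a) < 1 := by
  refine (Real.cos_le_one _).lt_of_ne fun h ↦ ha ?_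
  obtain ⟨n, hn⟩ := (Real.cos_eq_one_iff _).1 h
  refine (AddCircle.coe_eq_zero_iff 1).2 ⟨n, ?_⟩
  rw [zsmul_one]
  exact mul_left_cancel₀ Real.two_pi_pos.ne' (by linarith)

lemma mellin_cosGenFun_exp_neg_of_one_lt_re (a : ℝ) {s : ℂ} (hs : 1 < s.re) :
    mellin (fun t : ℝ ↦ (cosGenFun (Real.cos (2 * π * a)) (Real.exp (-t)) : ℂ)) s =
      Gamma s * cosZeta a s := by
  have h_series (t : ℝ) (ht : t ∈ Ioi 0) :
      HasSum (fun n : ℕ ↦ (Real.cos ((n + 1) * (2 * π * a)) : ℂ) * Real.exp (-((n : ℝ) + 1) * t))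
        (cosGenFun (Real.cos (2 * π * a)) (Real.exp (-t)) : ℂ) := by
    have h_exp : |Real.exp (-t)| < 1 := by simpa using ht
    convert! hasSum_ofReal.2 (hasSum_cosGenFun (2 * π * a) h_exp) using 2 with n
    rw [ofReal_mul, ← Real.exp_nat_mul]
    push_cast
    ring_nf
  have h_summable :
      Summable fun n : ℕ ↦ ‖(Real.cos ((n + 1) * (2 * π * a)) : ℂ)‖ / ((n : ℝ) + 1) ^ s.re := by
    refine .of_nonneg_of_le (fun n ↦ by positivity) (fun n ↦ ?_)
      ((summable_nat_add_iff 1).2 (Real.summable_one_div_nat_rpow.2 hs))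
    rw [norm_real, Nat.cast_add_one]
    gcongr
    exact Real.abs_cos_le_one _
  have h_mellin := hasSum_mellin (fun n ↦ .inr n.cast_add_one_pos) (by linarith) h_series h_summable
  have h_dirichlet := (hasSum_nat_add_iff' 1).2 (hasSum_nat_cosZeta a hs)
  have hs0 : s ≠ 0 := by
    rintro rfl
    norm_num at hs
  simp only [Finset.sum_range_one, Nat.cast_zero, zero_cpow hs0, div_zero, sub_zero] at h_dirichlet
  refine h_mellin.unique ((h_dirichlet.mul_left (Gamma s)).congr_fun fun n ↦ ?_)
  push_cast
  ring_nf

lemma mellin_cosGenFun_exp_neg {a : ℝ} (ha : (a : UnitAddCircle) ≠ 0) {s : ℂ} (hs : 0 < s.re) :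
    mellin (fun t : ℝ ↦ (cosGenFun (Real.cos (2 * π * a)) (Real.exp (-t)) : ℂ)) s =
      Gamma s * cosZeta a s := by
  have h_open : IsOpen {s : ℂ | 0 < s.re} := isOpen_lt continuous_const continuous_re
  have h_mellin : DifferentiableOn ℂ
      (mellin fun t : ℝ ↦ (cosGenFun (Real.cos (2 * π * a)) (Real.exp (-t)) : ℂ))
      {s : ℂ | 0 < s.re} := fun s hs ↦
    (differentiableAt_mellin_cosGenFun_exp_neg (cos_two_pi_mul_lt_one ha)
      hs).differentiableWithinAt
  have h_zeta : DifferentiableOn ℂ (fun s ↦ Gamma s * cosZeta a s) {s : ℂ | 0 < s.re} :=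
    fun s hs ↦ ((differentiableAt_Gamma_of_re_pos hs).mul
      (differentiable_cosZeta_of_ne_zero ha s)).differentiableWithinAt
  refine (h_mellin.analyticOnNhd h_open).eqOn_of_preconnected_of_eventuallyEq
    (h_zeta.analyticOnNhd h_open) (convex_halfSpace_re_gt 0).isPreconnected (z₀ := 2)
    (by simp) ?_ hs
  filter_upwards [(isOpen_lt continuous_const continuous_re).mem_nhds
    (show (1 : ℝ) < (2 : ℂ).re by norm_num)] with w hw
  exact mellin_cosGenFun_exp_neg_of_one_lt_re a hw

lemma cosZeta_ofReal_eq_integral_div_Gamma {a : ℝ} (ha : (a : UnitAddCircle) ≠ 0) {σ : ℝ}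
    (hσ : 0 < σ) :
    cosZeta a σ = (((∫ t in Ioi 0, t ^ (σ - 1) *
      cosGenFun (Real.cos (2 * π * a)) (Real.exp (-t))) / Real.Gamma σ : ℝ) : ℂ) := by
  have h_Gamma : (Real.Gamma σ : ℂ) ≠ 0 := ofReal_ne_zero.2 (Real.Gamma_pos_of_pos hσ).ne'
  rw [ofReal_div, ← mellin_ofReal fun t ↦ cosGenFun (Real.cos (2 * π * a)) (Real.exp (-t)),
    mellin_cosGenFun_exp_neg ha (by simpa using hσ), Gamma_ofReal, mul_div_cancel_left₀ _ h_Gamma]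

lemma cosZeta_ofReal_im_of_pos {a : ℝ} (ha : (a : UnitAddCircle) ≠ 0) {σ : ℝ} (hσ : 0 < σ) :
    (cosZeta a σ).im = 0 := by
  rw [cosZeta_ofReal_eq_integral_div_Gamma ha hσ, ofReal_im]

lemma cosZeta_ofReal_ne_zero_of_cos_nonpos {a : ℝ} (ha : Real.cos (2 * π * a) ≤ 0) {σ : ℝ}
    (hσ : 0 ≤ σ) : cosZeta a σ ≠ 0 := by
  rcases hσ.eq_or_lt with rfl | hσ
  · rw [ofReal_zero, cosZeta_apply_zero]
    norm_num
  have ha0 : (a : UnitAddCircle) ≠ 0 := fun h ↦ by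
    obtain ⟨n, rfl⟩ := (AddCircle.coe_eq_zero_iff 1).1 h
    rw [zsmul_one, mul_comm, Real.cos_int_mul_two_pi] at ha
    exact one_pos.not_ge ha
  have h_neg := integral_rpow_mul_neg
    (mellinConvergent_cosGenFun_exp_neg (cos_two_pi_mul_lt_one ha0) (by simpa using hσ))
    fun t _ ↦ cosGenFun_neg ha (Real.exp_pos (-t))
  rw [cosZeta_ofReal_eq_integral_div_Gamma ha0 hσ]
  exact ofReal_ne_zero.2 (div_neg_of_neg_of_pos h_neg (Real.Gamma_pos_of_pos hσ)).ne

lemma tendsto_cosZeta_ofReal_atTop (a : ℝ) :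
    Tendsto (fun σ : ℝ ↦ cosZeta a σ) atTop (𝓝 ((Real.cos (2 * π * a) : ℝ) : ℂ)) := by
  have h_abscissa :
      LSeries.abscissaOfAbsConv (fun n : ℕ ↦ ((Real.cos (2 * π * a * n) : ℝ) : ℂ)) < ⊤ :=
    (LSeriesHasSum_cos a (s := 2) (by norm_num)).LSeriesSummable.abscissaOfAbsConv_le.trans_lt
      (EReal.coe_lt_top _)
  have h_lim := LSeries.tendsto_atTop h_abscissa
  rw [Nat.cast_one, mul_one] at h_lim
  refine h_lim.congr' ?_
  filter_upwards [eventually_gt_atTop 1] with σ hσ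
  exact (LSeriesHasSum_cos a (by simpa using hσ)).LSeries_eq

lemma exists_pos_cosZeta_ofReal_eq_zero {a : ℝ} (ha : (a : UnitAddCircle) ≠ 0)
    (h_cos : 0 < Real.cos (2 * π * a)) : ∃ σ : ℝ, 0 < σ ∧ cosZeta a σ = 0 := by
  have h_cont : Continuous fun σ : ℝ ↦ (cosZeta a σ).re :=
    continuous_re.comp ((differentiable_cosZeta_of_ne_zero ha).continuous.comp continuous_ofReal)
  have h_zero : (cosZeta a (0 : ℝ)).re < 0 := by
    rw [ofReal_zero, cosZeta_apply_zero]
    norm_num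
  have h_lim : Tendsto (fun σ : ℝ ↦ (cosZeta a σ).re) atTop (𝓝 (Real.cos (2 * π * a))) := by
    simpa only [Function.comp_def, ofReal_re] using
      continuous_re.continuousAt.tendsto.comp (tendsto_cosZeta_ofReal_atTop a)
  obtain ⟨τ, h_pos, hτ⟩ := ((h_lim.eventually_const_lt h_cos).and (eventually_gt_atTop 0)).exists
  obtain ⟨σ, hσ, h_re⟩ := intermediate_value_Ioo hτ.le h_cont.continuousOn ⟨h_zero, h_pos⟩
  exact ⟨σ, hσ.1, Complex.ext h_re (cosZeta_ofReal_im_of_pos ha hσ.1)⟩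

/-! ### The cosine zeta function on the negative half-line -/

lemma hurwitzZetaEven_ofReal_re_pos (a : ℝ) {σ : ℝ} (hσ : 1 < σ) :
    0 < (hurwitzZetaEven a σ).re := by
  have h_term (n : ℤ) : (1 / ((|n + a| : ℝ) : ℂ) ^ (σ : ℂ) / 2).re = 1 / |n + a| ^ σ / 2 := by
    rw [← ofReal_cpow (abs_nonneg _)]
    exact_mod_cast rfl
  have h_sum := hasSum_re (hasSum_int_hurwitzZetaEven a (s := σ) (by simpa using hσ))
  simp only [h_term] at h_sum
  obtain ⟨n, hn⟩ : ∃ n : ℤ, 0 < n + a := ⟨⌊-a⌋ + 1, by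
    push_cast
    linarith [Int.lt_floor_add_one (-a)]⟩
  rw [← h_sum.tsum_eq]
  exact h_sum.summable.tsum_pos (fun _ ↦ by positivity) n (by positivity)

/-- The factor of `sin (πs/2)` in the functional equation of the cosine zeta function. -/
noncomputable def cosZetaCofactor (a : UnitAddCircle) (s : ℂ) : ℂ :=
  2 * (2 * π) ^ (-(1 - s)) * Gamma (1 - s) * hurwitzZetaEven a (1 - s)

lemma cosZeta_eq_cofactor_mul_sin (a : UnitAddCircle) {s : ℂ} (hs : ∀ n : ℕ, s ≠ n) :
    cosZeta a s = cosZetaCofactor a s * sin (π * s / 2) := by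
  have h := cosZeta_one_sub a (s := 1 - s) fun n hn ↦ hs n (sub_right_injective hn)
  rw [sub_sub_cancel, mul_one_sub, sub_div, cos_pi_div_two_sub] at h
  rw [h, cosZetaCofactor]
  ring

lemma cosZetaCofactor_ofReal_ne_zero (a : ℝ) {σ : ℝ} (hσ : σ < 0) :
    cosZetaCofactor a σ ≠ 0 := by
  have h_pow : (2 * π : ℂ) ^ (-(1 - σ) : ℂ) ≠ 0 := by
    rw [cpow_ne_zero_iff]
    exact .inl (by simp [Real.pi_ne_zero])
  have h_Gamma : Gamma (1 - σ) ≠ 0 := Gamma_ne_zero_of_re_pos (by simp; linarith)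
  have h_hurwitz : hurwitzZetaEven a (1 - σ) ≠ 0 := fun h ↦ by
    have h_pos := hurwitzZetaEven_ofReal_re_pos a (σ := 1 - σ) (by linarith)
    rw [ofReal_sub, ofReal_one, h] at h_pos
    exact h_pos.false
  exact mul_ne_zero (mul_ne_zero (mul_ne_zero two_ne_zero h_pow) h_Gamma) h_hurwitz

lemma differentiableAt_cosZetaCofactor (a : UnitAddCircle) {s : ℂ} (hs : s.re < 0) :
    DifferentiableAt ℂ (cosZetaCofactor a) s := by
  have h_sub : DifferentiableAt ℂ (fun w : ℂ ↦ 1 - w) s := by fun_prop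
  have h_pow : DifferentiableAt ℂ (fun w : ℂ ↦ (2 * π : ℂ) ^ (-(1 - w))) s :=
    h_sub.neg.const_cpow (.inl (by simp [Real.pi_ne_zero]))
  have h_Gamma : DifferentiableAt ℂ (fun w : ℂ ↦ Gamma (1 - w)) s :=
    (differentiableAt_Gamma_of_re_pos (by simp; linarith)).comp s h_sub
  have h_hurwitz : DifferentiableAt ℂ (fun w : ℂ ↦ hurwitzZetaEven a (1 - w)) s := by
    refine (differentiableAt_hurwitzZetaEven a fun h ↦ ?_).comp s h_sub
    exact ne_natCast_of_re_neg hs 0 (by simpa using h)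
  exact ((h_pow.const_mul 2).mul h_Gamma).mul h_hurwitz

lemma sin_pi_mul_ofReal_div_two_eq_zero_iff {σ : ℝ} (hσ : σ < 0) :
    sin (π * σ / 2) = 0 ↔ ∃ n : ℕ, σ = -(2 * (n + 1)) := by
  have h_iff (k : ℤ) : (π * σ / 2 : ℂ) = k * π ↔ σ = 2 * k := by
    rw [mul_comm (k : ℂ), mul_div_assoc, mul_right_inj' (ofReal_ne_zero.2 Real.pi_ne_zero),
      div_eq_iff two_ne_zero, mul_comm]
    exact_mod_cast Iff.rfl
  simp only [sin_eq_zero_iff, h_iff]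
  constructor
  · rintro ⟨k, rfl⟩
    have hk : k < 0 := by exact_mod_cast (by linarith : (k : ℝ) < 0)
    obtain ⟨n, rfl⟩ := Int.eq_negSucc_of_lt_zero hk
    exact ⟨n, by push_cast; ring⟩
  · rintro ⟨n, rfl⟩
    exact ⟨-(n + 1), by push_cast; ring⟩

lemma cosZeta_ofReal_eq_zero_iff_of_neg (a : ℝ) {σ : ℝ} (hσ : σ < 0) :
    cosZeta a σ = 0 ↔ ∃ n : ℕ, σ = -(2 * (n + 1)) := by
  rw [cosZeta_eq_cofactor_mul_sin a (ne_natCast_of_re_neg (by simpa using hσ)),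
    mul_eq_zero_iff_left (cosZetaCofactor_ofReal_ne_zero a hσ),
    sin_pi_mul_ofReal_div_two_eq_zero_iff hσ]

lemma deriv_cosZeta_ofReal_ne_zero_of_neg (a : ℝ) {σ : ℝ} (hσ : σ < 0) (h_zero : cosZeta a σ = 0) :
    deriv (cosZeta a) σ ≠ 0 := by
  have hσ_re : (σ : ℂ).re < 0 := by simpa using hσ
  have h_cofactor := cosZetaCofactor_ofReal_ne_zero a hσ
  have h_sin : sin (π * σ / 2) = 0 := by
    rwa [cosZeta_eq_cofactor_mul_sin a (ne_natCast_of_re_neg hσ_re),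
      mul_eq_zero_iff_left h_cofactor] at h_zero
  have h_cos : cos (π * σ / 2) ≠ 0 := fun h ↦ by
    simpa [h_sin, h] using sin_sq_add_cos_sq (π * σ / 2)
  have h_eq : cosZeta a =ᶠ[𝓝 (σ : ℂ)] fun s ↦ cosZetaCofactor a s * sin (π * s / 2) := by
    filter_upwards [(isOpen_lt continuous_re continuous_const).mem_nhds hσ_re] with s hs
    exact cosZeta_eq_cofactor_mul_sin a (ne_natCast_of_re_neg hs)
  have h_arg : HasDerivAt (fun s : ℂ ↦ π * s / 2) (π / 2) (σ : ℂ) := by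
    simpa using ((hasDerivAt_id (σ : ℂ)).const_mul (π : ℂ)).div_const 2
  have h_deriv := (differentiableAt_cosZetaCofactor a hσ_re).hasDerivAt.fun_mul h_arg.csin
  rw [h_eq.deriv_eq, h_deriv.deriv, h_sin, mul_zero, zero_add]
  exact mul_ne_zero h_cofactor (mul_ne_zero h_cos (by simp [Real.pi_ne_zero]))

/-! ### The real zeros of `P` -/

lemma Pf_eq_two_mul_cosZeta (a : ℝ) : Pf a = fun s ↦ 2 * cosZeta a s := by
  have h_neg : ((1 - a : ℝ) : UnitAddCircle) = -a := by
    rw [AddCircle.coe_sub, AddCircle.coe_period, zero_sub]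
  funext s
  rw [Pf, h_neg, cosZeta_eq]
  ring

lemma Pf_eq_zero_iff (a : ℝ) (s : ℂ) : Pf a s = 0 ↔ cosZeta a s = 0 := by
  simp [Pf_eq_two_mul_cosZeta]

lemma deriv_Pf (a : ℝ) (s : ℂ) : deriv (Pf a) s = 2 * deriv (cosZeta a) s := by
  rw [Pf_eq_two_mul_cosZeta, deriv_const_mul_field]

theorem real_zeros_P_iff_general (a : ℝ) (ha : (a : UnitAddCircle) ≠ 0) :
    Real.cos (2 * π * a) ≤ 0 ↔
      ∀ σ : ℝ,
        ((Pf a (σ : ℂ) = 0 ↔ ∃ n : ℕ, σ = -(2 * (n + 1))) ∧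
         (Pf a (σ : ℂ) = 0 → deriv (Pf a) (σ : ℂ) ≠ 0)) := by
  have h_trivial {σ : ℝ} : (∃ n : ℕ, σ = -(2 * (n + 1))) → σ < 0 := by
    rintro ⟨n, rfl⟩
    exact neg_neg_of_pos (by positivity)
  simp only [Pf_eq_zero_iff, deriv_Pf, ne_eq, mul_eq_zero, two_ne_zero, false_or]
  constructor
  · intro h_cos σ
    have h_neg (h : cosZeta a σ = 0) : σ < 0 :=
      lt_of_not_ge fun hσ ↦ cosZeta_ofReal_ne_zero_of_cos_nonpos h_cos hσ h
    exact ⟨⟨fun h ↦ (cosZeta_ofReal_eq_zero_iff_of_neg a (h_neg h)).1 h,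
      fun h ↦ (cosZeta_ofReal_eq_zero_iff_of_neg a (h_trivial h)).2 h⟩,
      fun h ↦ deriv_cosZeta_ofReal_ne_zero_of_neg a (h_neg h) h⟩
  · intro h_zeros
    by_contra! h_cos
    obtain ⟨σ, hσ, h⟩ := exists_pos_cosZeta_ofReal_eq_zero ha h_cos
    exact hσ.not_gt (h_trivial ((h_zeros σ).1.1 h))

lemma coe_unitAddCircle_ne_zero {a : ℝ} (ha₀ : 0 < a) (ha₁ : a < 1) : (a : UnitAddCircle) ≠ 0 :=
  fun h ↦ ha₀.ne' ((AddCircle.coe_eq_zero_iff_of_mem_Ico ⟨ha₀.le, ha₁⟩).1 h)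

lemma cos_two_pi_mul_nonpos_iff {a : ℝ} (ha₀ : 0 ≤ a) (ha₁ : a ≤ 1 / 2) :
    Real.cos (2 * π * a) ≤ 0 ↔ 1 / 4 ≤ a := by
  have hπ := Real.pi_pos
  refine ⟨fun h ↦ ?_, fun h ↦ Real.cos_nonpos_of_pi_div_two_le_of_le (by nlinarith) (by nlinarith)⟩
  contrapose! h
  exact Real.cos_pos_of_mem_Ioo ⟨by nlinarith, by nlinarith⟩

/-- For `0 < a ≤ 1/2`: `1/4 ≤ a ≤ 1/2` iff all real zeros of `P(·,a)` are
simple and exactly the negative even integers. -/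
theorem real_zeros_P_iff (a : ℝ) (ha₀ : 0 < a) (ha₁ : a ≤ 1 / 2) :
    (1 / 4 ≤ a ∧ a ≤ 1 / 2) ↔
      ∀ σ : ℝ,
        ((Pf a (σ : ℂ) = 0 ↔ ∃ n : ℕ, σ = -(2 * (n + 1))) ∧
         (Pf a (σ : ℂ) = 0 → deriv (Pf a) (σ : ℂ) ≠ 0)) := by
  rw [and_iff_left ha₁, ← cos_two_pi_mul_nonpos_iff ha₀.le ha₁]
  exact real_zeros_P_iff_general a (coe_unitAddCircle_ne_zero ha₀ (by linarith))
end

section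
/- Let 0 < a < 1/4. Then Z(σ,a) = 0 for every non-positive even integer σ, and in addition there exists a real number β < 1 with Z(β,a) = 0 such that either β is not a non-positive even integer, or the derivative of s ↦ Z(s,a) also vanishes at β (i.e. β is a zero of multiplicity at least two). -/
/-!
Up to the factor `2`, `Z(s,a)` is the even Hurwitz zeta function, i.e. its completion `Λ(s,a)`
divided by `Gammaℝ s`, whose poles `0, -2, -4, …` give the trivial zeros. The functional equation
takes `Λ(1 - s,a)` to the completion of `C(s) = ∑ cos(2πan) / n ^ s`. On the real axis `C` is
real-valued, `C(0) = -1/2`, and `C(t) → cos(2πa) > 0` as `t → ∞`, so `C(t) = 0` for some `t > 0`.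
Then `β = 1 - t` is a zero of `Λ(·,a)`; if `β` is also one of the trivial zeros, the two
factors `Λ(·,a)` and `1 / Gammaℝ` vanish together there.
-/

open HurwitzZeta Complex

/-- `Z(s,a) = ζ(s,a) + ζ(s,1−a)`. -/
noncomputable def Zf (a : ℝ) : ℂ → ℂ :=
  fun s => hurwitzZeta a s + hurwitzZeta (1 - a : ℝ) s

open Filter Topology

section RealZeros

lemma im_apply_ofReal_eq_zero_of_eventually {f : ℂ → ℂ} (hf : Differentiable ℂ f) {x₀ : ℝ}
    (hreal : ∀ᶠ x : ℝ in 𝓝 x₀, (f x).im = 0) (x : ℝ) : (f x).im = 0 := by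
  have hanalytic : AnalyticOnNhd ℝ (fun y : ℝ ↦ (f y).im) Set.univ :=
    fun y _ ↦ (hf.analyticAt y).im_ofReal
  exact congrFun (hanalytic.eq_of_eventuallyEq analyticOnNhd_const hreal) x

lemma im_cosZeta_ofReal_of_one_lt (a : ℝ) {x : ℝ} (hx : 1 < x) :
    (cosZeta a (x : ℂ)).im = 0 := by
  have hterm (n : ℕ) :
      ((Real.cos (2 * Real.pi * a * n) : ℂ) / (n : ℂ) ^ (x : ℂ)).im = 0 := by
    rw [← ofReal_natCast, ← ofReal_cpow n.cast_nonneg, ← ofReal_div, ofReal_im]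
  have hsum := hasSum_im (hasSum_nat_cosZeta a (s := x) hx)
  simp only [hterm] at hsum
  exact hsum.unique hasSum_zero

lemma tendsto_cosZeta_atTop (a : ℝ) :
    Tendsto (fun t : ℝ ↦ cosZeta a (t : ℂ)) atTop (𝓝 (Real.cos (2 * Real.pi * a))) := by
  have habscissa : LSeries.abscissaOfAbsConv (fun n : ℕ ↦ (Real.cos (2 * Real.pi * a * n) : ℂ))
      < ⊤ :=
    (LSeriesHasSum_cos a (s := 2) (by norm_num)).LSeriesSummable.abscissaOfAbsConv_le.trans_lt
      (EReal.coe_lt_top _)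
  have hlim := LSeries.tendsto_atTop habscissa
  rw [Nat.cast_one, mul_one] at hlim
  refine hlim.congr' ?_
  filter_upwards [eventually_gt_atTop 1] with t ht
  exact (LSeriesHasSum_cos a (s := t) ht).LSeries_eq

variable {a : ℝ}

lemma im_cosZeta_ofReal (ha : (a : UnitAddCircle) ≠ 0) (x : ℝ) :
    (cosZeta a (x : ℂ)).im = 0 :=
  im_apply_ofReal_eq_zero_of_eventually (differentiable_cosZeta_of_ne_zero ha)
    ((eventually_gt_nhds one_lt_two).mono fun _ ↦ im_cosZeta_ofReal_of_one_lt a) x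

lemma exists_pos_cosZeta_eq_zero (ha : (a : UnitAddCircle) ≠ 0)
    (hcos : 0 < Real.cos (2 * Real.pi * a)) : ∃ t : ℝ, 0 < t ∧ cosZeta a (t : ℂ) = 0 := by
  have hcont : Continuous fun t : ℝ ↦ (cosZeta a (t : ℂ)).re :=
    continuous_re.comp ((differentiable_cosZeta_of_ne_zero ha).continuous.comp continuous_ofReal)
  have hneg : (cosZeta a ((0 : ℝ) : ℂ)).re < 0 := by
    rw [ofReal_zero, cosZeta_apply_zero]
    norm_num
  have hlim : Tendsto (fun t : ℝ ↦ (cosZeta a (t : ℂ)).re) atTop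
      (𝓝 (Real.cos (2 * Real.pi * a))) := by
    simpa only [Function.comp_def, ofReal_re] using
      (continuous_re.tendsto _).comp (tendsto_cosZeta_atTop a)
  obtain ⟨M, hMpos, hM⟩ :=
    ((eventually_gt_atTop 0).and (hlim.eventually_const_lt hcos)).exists
  obtain ⟨t, ht, hre⟩ := intermediate_value_Ioo hMpos.le hcont.continuousOn ⟨hneg, hM⟩
  exact ⟨t, ht.1, Complex.ext hre (im_cosZeta_ofReal ha t)⟩

end RealZeros

lemma completedHurwitzZetaEven_one_sub_eq_zero_of_cosZeta {a : UnitAddCircle} {s : ℂ}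
    (hs : 0 < s.re) (hzero : cosZeta a s = 0) : completedHurwitzZetaEven a (1 - s) = 0 := by
  have hs₀ : s ≠ 0 := by
    rintro rfl
    exact hs.false
  rw [cosZeta, Function.update_of_ne hs₀, div_eq_zero_iff] at hzero
  rw [completedHurwitzZetaEven_one_sub]
  exact hzero.resolve_right (Gammaℝ_ne_zero_of_re_pos hs)

lemma exists_lt_one_completedHurwitzZetaEven_eq_zero {a : ℝ} (ha : (a : UnitAddCircle) ≠ 0)
    (hcos : 0 < Real.cos (2 * Real.pi * a)) :
    ∃ β : ℝ, β < 1 ∧ completedHurwitzZetaEven a (β : ℂ) = 0 := by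
  obtain ⟨t, ht, hzero⟩ := exists_pos_cosZeta_eq_zero ha hcos
  refine ⟨1 - t, sub_lt_self 1 ht, ?_⟩
  rw [ofReal_sub, ofReal_one]
  exact completedHurwitzZetaEven_one_sub_eq_zero_of_cosZeta ht hzero

section Factorization

variable {a : UnitAddCircle} {s : ℂ}

lemma hurwitzZetaEven_eq_zero_of_Gammaℝ_eq_zero (ha : a ≠ 0) (hGamma : Gammaℝ s = 0) :
    hurwitzZetaEven a s = 0 := by
  rw [hurwitzZetaEven_def_of_ne_or_ne (.inl ha), hGamma, div_zero]

lemma hurwitzZetaEven_eq_zero_of_completed (ha : a ≠ 0)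
    (hcompleted : completedHurwitzZetaEven a s = 0) : hurwitzZetaEven a s = 0 := by
  rw [hurwitzZetaEven_def_of_ne_or_ne (.inl ha), hcompleted, zero_div]

lemma deriv_hurwitzZetaEven_eq_zero (ha : a ≠ 0) (hcompleted : completedHurwitzZetaEven a s = 0)
    (hGamma : Gammaℝ s = 0) : deriv (hurwitzZetaEven a) s = 0 := by
  have hs : s ≠ 1 := by
    rintro rfl
    exact one_ne_zero (Gammaℝ_one.symm.trans hGamma)
  have hfactor : hurwitzZetaEven a = fun z ↦ completedHurwitzZetaEven a z * (Gammaℝ z)⁻¹ := by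
    funext z
    rw [hurwitzZetaEven_def_of_ne_or_ne (.inl ha), div_eq_mul_inv]
  rw [hfactor, deriv_fun_mul (differentiableAt_completedHurwitzZetaEven a (.inr ha) hs)
    (differentiable_Gammaℝ_inv s), hcompleted, hGamma, inv_zero, mul_zero, zero_mul, add_zero]

end Factorization

lemma Gammaℝ_neg_two_mul_nat (n : ℕ) : Gammaℝ ((-(2 * n) : ℝ) : ℂ) = 0 :=
  Gammaℝ_eq_zero_iff.mpr ⟨n, by push_cast; rfl⟩

lemma Zf_eq_two_mul_hurwitzZetaEven (a : ℝ) : Zf a = fun s ↦ 2 * hurwitzZetaEven a s := by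
  funext s
  have hreflect : ((1 - a : ℝ) : UnitAddCircle) = -(a : UnitAddCircle) := by
    rw [AddCircle.coe_sub, AddCircle.coe_period, zero_sub]
  rw [Zf, hreflect, hurwitzZetaEven_eq]
  ring

/-- For `0 < a < 1/4`, `Z(·,a)` vanishes at every non-positive even integer,
and there is an additional real zero `β < 1`: either `β` is not a non-positive even integer,
or the derivative also vanishes at `β` (a zero of multiplicity at least two). -/
theorem Z_extra_real_zero (a : ℝ) (ha₀ : 0 < a) (ha₁ : a < 1 / 4) :
    (∀ n : ℕ, Zf a ((-(2 * n) : ℝ) : ℂ) = 0) ∧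
    ∃ β : ℝ, β < 1 ∧ Zf a (β : ℂ) = 0 ∧
      ((¬ ∃ n : ℕ, β = -(2 * n)) ∨ deriv (Zf a) (β : ℂ) = 0) := by
  have ha : (a : UnitAddCircle) ≠ 0 :=
    (AddCircle.coe_eq_zero_iff_of_mem_Ico ⟨ha₀.le, by linarith⟩).not.mpr ha₀.ne'
  have hcos : 0 < Real.cos (2 * Real.pi * a) :=
    Real.cos_pos_of_mem_Ioo ⟨by nlinarith [Real.pi_pos], by nlinarith [Real.pi_pos]⟩
  rw [Zf_eq_two_mul_hurwitzZetaEven]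
  refine ⟨fun n ↦ mul_eq_zero_of_right 2 <|
    hurwitzZetaEven_eq_zero_of_Gammaℝ_eq_zero ha (Gammaℝ_neg_two_mul_nat n), ?_⟩
  obtain ⟨β, hβ, hcompleted⟩ := exists_lt_one_completedHurwitzZetaEven_eq_zero ha hcos
  refine ⟨β, hβ, mul_eq_zero_of_right 2 (hurwitzZetaEven_eq_zero_of_completed ha hcompleted), ?_⟩
  rcases em (∃ n : ℕ, β = -(2 * n)) with ⟨n, rfl⟩ | hβ_not_even
  · right
    rw [deriv_const_mul_field, deriv_hurwitzZetaEven_eq_zero ha hcompleted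
      (Gammaℝ_neg_two_mul_nat n), mul_zero]
  · exact .inl hβ_not_even
end
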